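/- Let (V, f) be a finite-dimensional nondegenerate symmetric bilinear space over a field K with char K ≠ 2, with dim V ≡ 2 (mod 4), and let φ ∈ SO(V). Then φ is bireflectional in SO(V) if and only if φ has an orthogonal summand of odd dimension, i.e., there exists a nonzero nondegenerate φ-invariant subspace of V of odd dimension. -/

import Mathlib

open Polynomial Module

namespace Biref

variable {K V : Type*} [Field K] [AddCommGroup V] [Module K V]

/-- The orthogonal group of a bilinear form: all linear automorphisms preserving `f`. -/
def orthGroup (f : LinearMap.BilinForm K V) : Subgroup (V ≃ₗ[K] V) where
  carrier := {φ | ∀ x y : V, f (φ x) (φ y) = f x y}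
  one_mem' := fun _ _ => rfl
  mul_mem' := by
    intro a b ha hb x y
    simpa using (ha (b x) (b y)).trans (hb x y)
  inv_mem' := by
    intro a ha x y
    show f (a.symm x) (a.symm y) = f x y
    conv_rhs => rw [← a.apply_symm_apply x, ← a.apply_symm_apply y]
    exact (ha _ _).symm

/-- The special orthogonal group: isometries of determinant 1. -/
def specialOrthGroup (f : LinearMap.BilinForm K V) : Subgroup (V ≃ₗ[K] V) where
  carrier := {φ | (∀ x y : V, f (φ x) (φ y) = f x y) ∧
      LinearMap.det (φ : V →ₗ[K] V) = 1}
  one_mem' := ⟨fun _ _ => rfl, by simp⟩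
  mul_mem' := by
    rintro a b ⟨ha, ha'⟩ ⟨hb, hb'⟩
    refine ⟨fun x y => by simpa using (ha (b x) (b y)).trans (hb x y), ?_⟩
    rw [LinearEquiv.coe_toLinearMap_mul, map_mul, ha', hb', one_mul]
  inv_mem' := by
    rintro a ⟨ha, ha'⟩
    refine ⟨fun x y => ?_, ?_⟩
    · show f (a.symm x) (a.symm y) = f x y
      conv_rhs => rw [← a.apply_symm_apply x, ← a.apply_symm_apply y]
      exact (ha _ _).symm
    · have h1 : LinearMap.det ((a⁻¹ * a : V ≃ₗ[K] V) : V →ₗ[K] V) = 1 := by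
        rw [inv_mul_cancel, LinearEquiv.coe_toLinearMap_one, LinearMap.det_id]
      rw [LinearEquiv.coe_toLinearMap_mul, map_mul, ha', mul_one] at h1
      exact h1

/-- The commutator subgroup `Ω(V)` of the orthogonal group. -/
def omegaGroup (f : LinearMap.BilinForm K V) : Subgroup (V ≃ₗ[K] V) :=
  ⁅orthGroup f, orthGroup f⁆

/-- `g` is a product of two involutions lying in the subgroup `H`. -/
def IsBireflectionalIn {G : Type*} [Group G] (H : Subgroup G) (g : G) : Prop :=
  ∃ σ τ : G, σ ∈ H ∧ τ ∈ H ∧ σ ^ 2 = 1 ∧ τ ^ 2 = 1 ∧ g = σ * τ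

/-- `g` is bireflectional in the group `G`. -/
def IsBireflectional {G : Type*} [Group G] (g : G) : Prop :=
  ∃ σ τ : G, σ ^ 2 = 1 ∧ τ ^ 2 = 1 ∧ g = σ * τ

/-- `g` is reversed by some element of `H`. -/
def IsReversibleIn {G : Type*} [Group G] (H : Subgroup G) (g : G) : Prop :=
  ∃ α : G, α ∈ H ∧ α * g * α⁻¹ = g⁻¹

/-- A subspace is invariant under an endomorphism. -/
def Invt (ψ : V →ₗ[K] V) (U : Submodule K V) : Prop :=
  ∀ x ∈ U, ψ x ∈ U

/-- The discriminant of a (finite-dimensional, nondegenerate) bilinear space is the class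
of `d` in `K*/(K*)²`: some Gram determinant equals `d` times a nonzero square. -/
def HasDisc (f : LinearMap.BilinForm K V) (d : K) : Prop :=
  ∃ (b : Basis (Fin (Module.finrank K V)) K V) (c : Kˣ),
    (Matrix.of fun i j => f (b i) (b j)).det = d * (c : K) ^ 2

/-- A nondegenerate symmetric bilinear space is hyperbolic iff its Witt index is half its
dimension, i.e. there is a totally isotropic subspace of half the dimension. -/
def IsHyperbolicSpace (f : LinearMap.BilinForm K V) : Prop :=
  ∃ W : Submodule K V, (∀ x ∈ W, ∀ y ∈ W, f x y = 0) ∧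
    2 * Module.finrank K W = Module.finrank K V

/-- The multiplicity of `p ^ d` as an elementary divisor of `φ`. -/
noncomputable def edMult (φ : Module.End K V) (p : K[X]) (d : ℕ) : ℕ :=
  (2 * Module.finrank K (LinearMap.ker (Polynomial.aeval φ p ^ d))
    - Module.finrank K (LinearMap.ker (Polynomial.aeval φ p ^ (d + 1)))
    - Module.finrank K (LinearMap.ker (Polynomial.aeval φ p ^ (d - 1)))) / p.natDegree

/-- `n_j(φ)`: the number of elementary divisors `(x ± 1) ^ d` of `φ` with `d ≡ j mod 8`,
counted with multiplicity. -/
noncomputable def nPM [FiniteDimensional K V] (φ : Module.End K V) (j : ℕ) : ℕ :=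
  ∑ d ∈ Finset.range (Module.finrank K V + 1),
    if d % 8 = j % 8 then edMult φ (X - 1) d + edMult φ (X + 1) d else 0

/-- The Fitting one space `Bahn^∞(ψ) = ⋂ⱼ im (ψ - 1)^j`. -/
noncomputable def bahnInf (ψ : Module.End K V) : Submodule K V :=
  ⨅ j : ℕ, LinearMap.range ((ψ - 1) ^ j)

/-- The `K[x]`-submodule generated by `v` (`x` acting as `ψ`). -/
def cycSub (ψ : Module.End K V) (v : V) : Submodule K V :=
  Submodule.span K (Set.range fun n : ℕ => (ψ ^ n) v)

/-- `V` is a cyclic `K[x]`-module, `x` acting as `ψ`. -/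
def IsCyclicEnd (ψ : Module.End K V) : Prop :=
  ∃ v : V, cycSub ψ v = ⊤

/-- `V` is a direct sum of two cyclic `K[x]`-submodules, `x` acting as `ψ`. -/
def IsBicyclicEnd (ψ : Module.End K V) : Prop :=
  ∃ v w : V, cycSub ψ v ⊓ cycSub ψ w = ⊥ ∧ cycSub ψ v ⊔ cycSub ψ w = ⊤

/-- `V` is an indecomposable `K[x]`-module, `x` acting as `ψ`. -/
def ModIndec (ψ : Module.End K V) : Prop :=
  (⊥ : Submodule K V) ≠ ⊤ ∧
    ¬∃ A B : Submodule K V, Invt ψ A ∧ Invt ψ B ∧ A ≠ ⊥ ∧ B ≠ ⊥ ∧ A ⊓ B = ⊥ ∧ A ⊔ B = ⊤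

/-- `ψ` is orthogonally indecomposable w.r.t. `f`: `V ≠ 0` and the only nondegenerate
invariant subspaces are `0` and `V`. -/
def OrthIndec (f : LinearMap.BilinForm K V) (ψ : Module.End K V) : Prop :=
  (⊥ : Submodule K V) ≠ ⊤ ∧
    ∀ U : Submodule K V, Invt ψ U → (f.restrict U).Nondegenerate → U = ⊥ ∨ U = ⊤

/-- The Witt index: the dimension of a maximal totally isotropic subspace. -/
noncomputable def wittIndex (f : LinearMap.BilinForm K V) : ℕ :=
  sSup {n | ∃ W : Submodule K V, (∀ x ∈ W, ∀ y ∈ W, f x y = 0) ∧ Module.finrank K W = n}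

/-!
A factorization of `φ` into two involutions of `SO(V)` amounts to an involution `σ` of `SO(V)` with
`φσφ = σ`. Splitting off the generalized eigenspace of `φ` for `-1`, and replacing `φ` by `-φ`
there, one may assume that `φ + 1` is invertible. The Cayley transform `C = (φ - 1)(φ + 1)⁻¹` is
then skew-adjoint, and the condition on `σ` becomes `σC = -Cσ`.

Such an isometric involution `σ` always exists: `V` splits into orthogonal pieces, each generated by
one or two vectors over `K[C]`, on which even and odd polynomials in `C` produce two orthogonal
subspaces that are interchanged by `C`. Given an orthogonal summand of odd dimension, the sign of
`σ` on that summand can be chosen so that `det σ = 1`.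

If all orthogonal summands have even dimension, then `C` has no Jordan block of odd size for the
eigenvalue `0`. As `C` interchanges the eigenspaces of `σ`, these have equal dimension, whence
`det σ = (-1) ^ (dim V / 2)`, which is `-1` if `dim V ≡ 2 (mod 4)`.
-/

section CyclicSubspaces

lemma exists_pow_eq_add_of_not_pow_succ_dvd {R : Type*} [CommRing R] [IsDomain R]
    [IsPrincipalIdealRing R] {p a : R} (hp : Irreducible p) {e : ℕ} (ha : ¬p ^ (e + 1) ∣ a) :
    ∃ c r, p ^ e = c * a + r * p ^ (e + 1) := by
  obtain ⟨g, hg⟩ := IsPrincipalIdealRing.principal (Ideal.span {a, p ^ (e + 1)})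
  have mem_iff (x : R) : x ∈ Ideal.span {a, p ^ (e + 1)} ↔ g ∣ x := by
    rw [hg]; exact Ideal.mem_span_singleton
  have hga : g ∣ a := (mem_iff a).1 (Ideal.subset_span (by simp))
  have hgp : g ∣ p ^ (e + 1) := (mem_iff _).1 (Ideal.subset_span (by simp))
  obtain ⟨i, -, hassoc⟩ := (dvd_prime_pow hp.prime _).1 hgp
  have hie : i ≤ e := by
    by_contra! hlt
    exact ha (((pow_dvd_pow p hlt).trans hassoc.symm.dvd).trans hga)
  obtain ⟨c, r, hcr⟩ := Ideal.mem_span_pair.1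
    ((mem_iff (p ^ e)).2 (hassoc.dvd.trans (pow_dvd_pow p hie)))
  exact ⟨c, r, hcr.symm⟩

lemma mem_cycSub {ψ : Module.End K V} {v w : V} : w ∈ cycSub ψ v ↔ ∃ a : K[X], aeval ψ a v = w := by
  constructor
  · intro hw
    refine Submodule.span_induction ?_ ⟨0, by simp⟩ ?_ ?_ hw
    · rintro _ ⟨n, rfl⟩
      exact ⟨X ^ n, by simp⟩
    · rintro _ _ _ _ ⟨a, rfl⟩ ⟨b, rfl⟩
      exact ⟨a + b, by simp⟩
    · rintro c _ _ ⟨a, rfl⟩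
      exact ⟨c • a, by simp⟩
  · rintro ⟨a, rfl⟩
    rw [aeval_eq_sum_range, LinearMap.sum_apply]
    exact Submodule.sum_mem _ fun n _ =>
      Submodule.smul_mem _ _ (Submodule.subset_span ⟨n, rfl⟩)

lemma aeval_mem_cycSub (ψ : Module.End K V) (a : K[X]) (v : V) : aeval ψ a v ∈ cycSub ψ v :=
  mem_cycSub.2 ⟨a, rfl⟩

lemma self_mem_cycSub (ψ : Module.End K V) (v : V) : v ∈ cycSub ψ v :=
  mem_cycSub.2 ⟨1, by simp⟩

lemma invt_cycSub (ψ : Module.End K V) (v : V) : Invt ψ (cycSub ψ v) := by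
  intro x hx
  obtain ⟨a, rfl⟩ := mem_cycSub.1 hx
  exact mem_cycSub.2 ⟨X * a, by simp⟩

lemma invt_iff_le_comap {ψ : Module.End K V} {W : Submodule K V} :
    Invt ψ W ↔ W ≤ W.comap ψ := Iff.rfl

lemma Invt.pow {ψ : Module.End K V} {W : Submodule K V} (hW : Invt ψ W) (n : ℕ) :
    Invt (ψ ^ n) W := by
  induction n with
  | zero => exact fun x hx => by simpa using hx
  | succ n ih => exact fun x hx => by simpa [pow_succ'] using hW _ (ih x hx)

lemma cycSub_le {ψ : Module.End K V} {W : Submodule K V} (hW : Invt ψ W) {v : V} (hv : v ∈ W) :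
    cycSub ψ v ≤ W :=
  Submodule.span_le.2 (by rintro _ ⟨n, rfl⟩; exact hW.pow n v hv)

lemma Invt.aeval {ψ : Module.End K V} {W : Submodule K V} (hW : Invt ψ W) (a : K[X]) :
    Invt (aeval ψ a) W :=
  fun x hx => cycSub_le hW hx (aeval_mem_cycSub ψ a x)

lemma pow_succ_dvd_of_functional {S : Module.End K V} {v : V} {p : K[X]} (hp : Irreducible p)
    {e : ℕ} (hv : aeval S (p ^ (e + 1)) v = 0) {l : V →ₗ[K] K} (hl : l (aeval S (p ^ e) v) ≠ 0)
    {a : K[X]} (ha : ∀ c : K[X], l (aeval S (c * a) v) = 0) : p ^ (e + 1) ∣ a := by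
  by_contra hdvd
  obtain ⟨c, r, hcr⟩ := exists_pow_eq_add_of_not_pow_succ_dvd hp hdvd
  apply hl
  rw [hcr, map_add, LinearMap.add_apply, map_add, ha c, map_mul, Module.End.mul_apply, hv,
    map_zero, map_zero, add_zero]

lemma pow_succ_dvd_of_aeval_add_aeval {C : Module.End K V} {u v : V} {e : ℕ}
    (hu : (C ^ (e + 1)) u = 0) (hv : (C ^ (e + 1)) v = 0) {l m : V →ₗ[K] K}
    (hlu : l ((C ^ e) u) = 0) (hlv : l ((C ^ e) v) ≠ 0)
    (hmu : m ((C ^ e) u) ≠ 0) (hmv : m ((C ^ e) v) = 0) {a b : K[X]}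
    (hl : ∀ k, l ((C ^ k) (aeval C a u + aeval C b v)) = 0)
    (hm : ∀ k, m ((C ^ k) (aeval C a u + aeval C b v)) = 0) :
    X ^ (e + 1) ∣ a ∧ X ^ (e + 1) ∣ b := by
  suffices ∀ j ≤ e + 1, X ^ j ∣ a ∧ X ^ j ∣ b from this _ le_rfl
  intro j
  induction j with
  | zero => simp
  | succ j ih =>
    intro hj
    obtain ⟨⟨a, rfl⟩, b, rfl⟩ := ih (by omega)
    have leading {w : V} (hw : (C ^ (e + 1)) w = 0) (q : K[X]) :
        (C ^ (e - j)) (aeval C (X ^ j * q) w) = q.coeff 0 • (C ^ e) w := by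
      rw [← aeval_X_pow (R := K) (x := C) (n := e - j), ← Module.End.mul_apply, ← map_mul,
        ← mul_assoc, ← pow_add, Nat.sub_add_cancel (by omega)]
      nth_rw 1 [← divX_mul_X_add q]
      rw [mul_add, mul_comm, mul_assoc, ← pow_succ', map_add, map_mul, LinearMap.add_apply,
        Module.End.mul_apply, aeval_X_pow, hw, map_zero, zero_add, map_mul]
      simp [Algebra.algebraMap_eq_smul_one]
    have hl' := hl (e - j)
    have hm' := hm (e - j)
    rw [map_add, leading hu, leading hv] at hl' hm'
    simp only [map_add, map_smul, smul_eq_mul, hlu, hmv, mul_zero, zero_add, add_zero,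
      mul_eq_zero, hlv, hmu, or_false] at hl' hm'
    rw [pow_succ]
    exact ⟨mul_dvd_mul_left _ (X_dvd_iff.2 hm'), mul_dvd_mul_left _ (X_dvd_iff.2 hl')⟩

lemma aeval_eq_zero_of_pow_dvd {C : Module.End K V} {v : V} {n : ℕ} (hv : (C ^ n) v = 0)
    {a : K[X]} (ha : X ^ n ∣ a) : aeval C a v = 0 := by
  obtain ⟨b, rfl⟩ := ha
  rw [mul_comm, map_mul, Module.End.mul_apply, aeval_X_pow, hv, map_zero]

lemma finrank_cycSub {ψ : Module.End K V} {v : V} {q : K[X]}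
    (hq : ∀ a : K[X], aeval ψ a v = 0 ↔ q ∣ a) : finrank K (cycSub ψ v) = q.natDegree := by
  let evalAt : K[X] →ₗ[K] V := (LinearMap.applyₗ v).comp (aeval ψ).toLinearMap
  have hker : LinearMap.ker evalAt = (Ideal.span {q}).restrictScalars K := by
    ext a
    exact (hq a).trans Ideal.mem_span_singleton.symm
  have hrange : LinearMap.range evalAt = cycSub ψ v := by
    ext w
    exact mem_cycSub.symm
  calc finrank K (cycSub ψ v)
      = finrank K (K[X] ⧸ LinearMap.ker evalAt) := by
        rw [← hrange, evalAt.quotKerEquivRange.finrank_eq]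
    _ = finrank K (K[X] ⧸ Ideal.span {q}) := by
        rw [hker]
        exact (Submodule.Quotient.restrictScalarsEquiv K (Ideal.span {q})).finrank_eq
    _ = q.natDegree := finrank_quotient_span_eq_natDegree

lemma exists_pow_apply_notMem_range [FiniteDimensional K V] {T : Module.End K V}
    (hT : LinearMap.ker T ≠ ⊥) :
    ∃ (e : ℕ) (u : V), (T ^ (e + 1)) u = 0 ∧ (T ^ e) u ∉ LinearMap.range (T ^ (e + 1)) := by
  obtain ⟨w, hw, hw0⟩ := Submodule.exists_mem_ne_zero_of_ne_bot hT
  obtain ⟨n, hcompl, hn⟩ :=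
    (T.eventually_isCompl_ker_pow_range_pow.and (Filter.eventually_ge_atTop 1)).exists
  have hw' : w ∈ LinearMap.ker (T ^ n) :=
    Module.End.pow_map_zero_of_le hn (by simpa using hw)
  have hexists : ∃ m, w ∉ LinearMap.range (T ^ m) :=
    ⟨n, fun hmem => hw0 (Submodule.disjoint_def.1 hcompl.disjoint w hw' hmem)⟩
  obtain ⟨e, hmem, hnotMem⟩ := Nat.exists_not_and_succ_of_not_zero_of_exists (by simp) hexists
  obtain ⟨u, rfl⟩ := not_not.1 hmem
  exact ⟨e, u, by rwa [pow_succ', Module.End.mul_apply], hnotMem⟩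

end CyclicSubspaces

section BilinearForms

open LinearMap (IsAdjointPair)

variable {f : LinearMap.BilinForm K V}

lemma restrict_nondegenerate_iff (hf : f.IsSymm) {W : Submodule K V} :
    (f.restrict W).Nondegenerate ↔ ∀ x ∈ W, (∀ y ∈ W, f x y = 0) → x = 0 := by
  refine (hf.restrict W).isRefl.nondegenerate_iff_separatingLeft.trans ⟨?_, ?_⟩
  · exact fun h x hx hxy => congrArg Subtype.val (h ⟨x, hx⟩ fun y => hxy y y.2)
  · exact fun h x hxy => Subtype.ext (h x x.2 fun y hy => hxy ⟨y, hy⟩)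

lemma restrict_orthogonal_nondegenerate [FiniteDimensional K V] (hf : f.IsSymm)
    (hnd : f.Nondegenerate) {W : Submodule K V} (hW : (f.restrict W).Nondegenerate) :
    (f.restrict (f.orthogonal W)).Nondegenerate := by
  rw [LinearMap.BilinForm.restrict_nondegenerate_iff_isCompl_orthogonal hf.isRefl,
    LinearMap.BilinForm.orthogonal_orthogonal hnd hf.isRefl]
  exact (LinearMap.BilinForm.isCompl_orthogonal_of_restrict_nondegenerate hf.isRefl hW).symm

lemma restrict_sup_nondegenerate (hf : f.IsSymm) {W W' : Submodule K V}
    (hW : (f.restrict W).Nondegenerate) (hW' : (f.restrict W').Nondegenerate)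
    (hle : W' ≤ f.orthogonal W) : (f.restrict (W ⊔ W')).Nondegenerate := by
  rw [restrict_nondegenerate_iff hf] at hW hW' ⊢
  intro x hx hxy
  obtain ⟨w, hw, w', hw', rfl⟩ := Submodule.mem_sup.1 hx
  have hw0 : w = 0 := hW w hw fun y hy => by
    have := hxy y (Submodule.mem_sup_left hy)
    rwa [map_add, LinearMap.add_apply, hf.eq w' y, hle hw' y hy, add_zero] at this
  have hw'0 : w' = 0 := hW' w' hw' fun y hy => by
    have := hxy y (Submodule.mem_sup_right hy)
    rwa [map_add, LinearMap.add_apply, hle hy w hw, zero_add] at this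
  rw [hw0, hw'0, add_zero]

lemma restrict_map_subtype_nondegenerate (hf : f.IsSymm) {W : Submodule K V} {U : Submodule K W}
    (hU : ((f.restrict W).restrict U).Nondegenerate) :
    (f.restrict (U.map W.subtype)).Nondegenerate := by
  rw [restrict_nondegenerate_iff (hf.restrict W)] at hU
  rw [restrict_nondegenerate_iff hf]
  rintro _ ⟨x, hx, rfl⟩ hxy
  exact congrArg Subtype.val (hU x hx fun y hy => hxy y ⟨y, hy, rfl⟩)

lemma exists_mem_orthogonal_apply_ne_zero [FiniteDimensional K V] (hf : f.IsSymm)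
    (hnd : f.Nondegenerate) {M : Submodule K V} {w : V} (hw : w ∉ M) :
    ∃ y ∈ f.orthogonal M, f w y ≠ 0 := by
  by_contra! h
  refine hw ?_
  rw [← LinearMap.BilinForm.orthogonal_orthogonal hnd hf.isRefl M]
  exact fun y hy => (hf.eq y w).trans (h y hy)

lemma isAdjointPair_pow {S T : Module.End K V} (h : IsAdjointPair f f S T) (n : ℕ) :
    IsAdjointPair f f (S ^ n : Module.End K V) (T ^ n : Module.End K V) := by
  induction n with
  | zero => exact LinearMap.isAdjointPair_one
  | succ n ih => rw [pow_succ, pow_succ']; exact ih.mul h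

lemma isAdjointPair_aeval {S T : Module.End K V} (h : IsAdjointPair f f S T) (a : K[X]) :
    IsAdjointPair f f (aeval S a) (aeval T a) := by
  intro x y
  simp only [aeval_eq_sum_range, LinearMap.sum_apply, map_sum, LinearMap.smul_apply, map_smul,
    isAdjointPair_pow h _ x y]

lemma Invt.orthogonal {S T : Module.End K V} (h : IsAdjointPair f f S T) {W : Submodule K V}
    (hW : Invt S W) : Invt T (f.orthogonal W) :=
  fun y hy x hx => (h x y).symm.trans (hy _ (hW x hx))

lemma apply_eq_zero_of_mem_orthogonal_range (hnd : f.Nondegenerate) {S T : Module.End K V}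
    (h : IsAdjointPair f f S T) {y : V} (hy : y ∈ f.orthogonal (LinearMap.range S)) : T y = 0 :=
  hnd.2 _ fun x => (h x y).symm.trans (hy _ ⟨x, rfl⟩)

lemma restrict_cycSub_nondegenerate (hf : f.IsSymm) {S T : Module.End K V}
    (hST : IsAdjointPair f f S T) {v : V} (hT : Invt T (cycSub S v)) {p : K[X]}
    (hp : Irreducible p) {e : ℕ} (hv : aeval S (p ^ (e + 1)) v = 0)
    (hne : f (aeval S (p ^ e) v) v ≠ 0) : (f.restrict (cycSub S v)).Nondegenerate := by
  rw [restrict_nondegenerate_iff hf]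
  intro x hx hxy
  obtain ⟨a, rfl⟩ := mem_cycSub.1 hx
  have hdvd : p ^ (e + 1) ∣ a := by
    refine pow_succ_dvd_of_functional hp hv (l := f.flip v) hne fun c => ?_
    rw [map_mul, Module.End.mul_apply, LinearMap.BilinForm.flip_apply,
      isAdjointPair_aeval hST c]
    exact hxy _ (hT.aeval c v (self_mem_cycSub S v))
  obtain ⟨b, rfl⟩ := hdvd
  rw [mul_comm, map_mul, Module.End.mul_apply, hv, map_zero]

lemma exists_mem_apply_self_ne_zero (h2 : (2 : K) ≠ 0) (hf : f.IsSymm) {S : Module.End K V}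
    (hS : IsAdjointPair f f S S) {M : Submodule K V} {x y : V} (hx : x ∈ M) (hy : y ∈ M)
    (hxy : f (S x) y ≠ 0) : ∃ v ∈ M, f (S v) v ≠ 0 := by
  by_contra! h
  have hsum := h (x + y) (M.add_mem hx hy)
  simp only [map_add, LinearMap.add_apply, h x hx, h y hy, zero_add, add_zero] at hsum
  rw [hS y x, hf.eq y (S x), ← two_mul] at hsum
  exact hxy ((mul_eq_zero.1 hsum).resolve_left h2)

lemma exists_apply_pow_self_ne_zero [FiniteDimensional K V] (h2 : (2 : K) ≠ 0) (hf : f.IsSymm)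
    (hnd : f.Nondegenerate) {S T : Module.End K V} (hST : IsAdjointPair f f S T) {e : ℕ}
    (hpow : T ^ e = S ^ e) (hker : LinearMap.ker (T ^ (e + 1)) ≤ LinearMap.ker (S ^ (e + 1)))
    {u : V} (hu : (S ^ (e + 1)) u = 0) (hmem : (S ^ e) u ∉ LinearMap.range (S ^ (e + 1))) :
    ∃ v, (S ^ (e + 1)) v = 0 ∧ f ((S ^ e) v) v ≠ 0 := by
  obtain ⟨y, hy, hne⟩ := exists_mem_orthogonal_apply_ne_zero hf hnd hmem
  have hSy : y ∈ LinearMap.ker (S ^ (e + 1)) :=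
    hker (apply_eq_zero_of_mem_orthogonal_range hnd (isAdjointPair_pow hST _) hy)
  have hself := isAdjointPair_pow hST e
  rw [hpow] at hself
  exact exists_mem_apply_self_ne_zero h2 hf hself (LinearMap.mem_ker.2 hu) hSy hne

end BilinearForms

section SkewAdjoint

open LinearMap (IsAdjointPair IsSkewAdjoint)

variable {f : LinearMap.BilinForm K V} {C : Module.End K V}

/-- Orthogonal subspaces `P` and `Q` that are interchanged by `C`. If they span `V`, then the
involution with eigenspaces `P` and `Q` is an isometry that anticommutes with `C`. -/
structure IsSwapped (f : LinearMap.BilinForm K V) (C : Module.End K V) (P Q : Submodule K V) :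
    Prop where
  le_orthogonal : Q ≤ f.orthogonal P
  le_comap_left : P ≤ Q.comap C
  le_comap_right : Q ≤ P.comap C

namespace IsSwapped

variable {P Q P' Q' : Submodule K V}

lemma symm (hf : f.IsSymm) (h : IsSwapped f C P Q) : IsSwapped f C Q P where
  le_orthogonal x hx y hy := (hf.eq x y).symm.trans (h.le_orthogonal hy x hx)
  le_comap_left := h.le_comap_right
  le_comap_right := h.le_comap_left

lemma invt_sup (h : IsSwapped f C P Q) : Invt C (P ⊔ Q) :=
  invt_iff_le_comap.2 <| sup_le (h.le_comap_left.trans (Submodule.comap_mono le_sup_right))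
    (h.le_comap_right.trans (Submodule.comap_mono le_sup_left))

lemma sup (h : IsSwapped f C P Q) (h' : IsSwapped f C P' Q') (hPQ' : Q' ≤ f.orthogonal P)
    (hP'Q : Q ≤ f.orthogonal P') : IsSwapped f C (P ⊔ P') (Q ⊔ Q') where
  le_orthogonal y hy x hx := by
    obtain ⟨p, hp, p', hp', rfl⟩ := Submodule.mem_sup.1 hx
    obtain ⟨q, hq, q', hq', rfl⟩ := Submodule.mem_sup.1 hy
    simp only [map_add, LinearMap.add_apply, h.le_orthogonal hq p hp, hP'Q hq p' hp',
      hPQ' hq' p hp, h'.le_orthogonal hq' p' hp', add_zero]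
  le_comap_left := sup_le (h.le_comap_left.trans (Submodule.comap_mono le_sup_left))
    (h'.le_comap_left.trans (Submodule.comap_mono le_sup_right))
  le_comap_right := sup_le (h.le_comap_right.trans (Submodule.comap_mono le_sup_left))
    (h'.le_comap_right.trans (Submodule.comap_mono le_sup_right))

lemma map_subtype {W : Submodule K V} {hW : Invt C W} {P Q : Submodule K W}
    (h : IsSwapped (f.restrict W) (C.restrict hW) P Q) :
    IsSwapped f C (P.map W.subtype) (Q.map W.subtype) where
  le_orthogonal := by
    rintro _ ⟨y, hy, rfl⟩ _ ⟨x, hx, rfl⟩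
    exact h.le_orthogonal hy x hx
  le_comap_left := by
    rintro _ ⟨x, hx, rfl⟩
    exact ⟨_, h.le_comap_left hx, rfl⟩
  le_comap_right := by
    rintro _ ⟨x, hx, rfl⟩
    exact ⟨_, h.le_comap_right hx, rfl⟩

end IsSwapped

lemma isAdjointPair_neg_of_isSkewAdjoint (hC : IsSkewAdjoint f C) :
    IsAdjointPair f f C (-C : Module.End K V) := hC

lemma isAdjointPair_sq_of_isSkewAdjoint (hC : IsSkewAdjoint f C) :
    IsAdjointPair f f (C ^ 2 : Module.End K V) (C ^ 2 : Module.End K V) := by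
  simpa only [neg_sq] using isAdjointPair_pow (isAdjointPair_neg_of_isSkewAdjoint hC) 2

lemma isSkewAdjoint_pow_of_odd (hC : IsSkewAdjoint f C) {n : ℕ} (hn : Odd n) :
    IsSkewAdjoint f (C ^ n : Module.End K V) := by
  have hadj := isAdjointPair_pow (isAdjointPair_neg_of_isSkewAdjoint hC) n
  rwa [hn.neg_pow] at hadj

lemma apply_self_eq_zero_of_isSkewAdjoint (h2 : (2 : K) ≠ 0) (hf : f.IsSymm)
    (hC : IsSkewAdjoint f C) (x : V) : f (C x) x = 0 := by
  have hneg : f (C x) x = -f (C x) x :=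
    (hC x x).trans (by rw [Pi.neg_apply, map_neg, neg_inj]; exact hf.eq x (C x))
  have hdouble : 2 * f (C x) x = 0 := by linear_combination hneg
  exact (mul_eq_zero.1 hdouble).resolve_left h2

lemma commute_aeval_sq (C : Module.End K V) (a : K[X]) : Commute C (aeval (C ^ 2) a) := by
  simpa only [aeval_X, expand_aeval] using (Commute.all X (expand K 2 a)).map (aeval C)

lemma isSkewAdjoint_mul_aeval_sq (hC : IsSkewAdjoint f C) (a : K[X]) :
    IsSkewAdjoint f (C * aeval (C ^ 2) a : Module.End K V) := by
  have hadj := (isAdjointPair_neg_of_isSkewAdjoint hC).mul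
    (isAdjointPair_aeval (isAdjointPair_sq_of_isSkewAdjoint hC) a)
  rwa [mul_neg, ← (commute_aeval_sq C a).eq] at hadj

lemma isSwapped_cycSub_sq (h2 : (2 : K) ≠ 0) (hf : f.IsSymm) (hC : IsSkewAdjoint f C) (v : V) :
    IsSwapped f C (cycSub (C ^ 2) v) ((cycSub (C ^ 2) v).map C) where
  le_orthogonal := by
    rintro _ ⟨_, hy, rfl⟩ _ hx
    obtain ⟨a, rfl⟩ := mem_cycSub.1 hx
    obtain ⟨b, rfl⟩ := mem_cycSub.1 hy
    rw [isAdjointPair_aeval (isAdjointPair_sq_of_isSkewAdjoint hC) a, ← Module.End.mul_apply,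
      ← Module.End.mul_apply, ← (commute_aeval_sq C a).eq, mul_assoc, ← map_mul,
      ← hf.eq]
    exact apply_self_eq_zero_of_isSkewAdjoint h2 hf (isSkewAdjoint_mul_aeval_sq hC (a * b)) v
  le_comap_left := Submodule.le_comap_map C _
  le_comap_right := by
    rintro _ ⟨x, hx, rfl⟩
    exact invt_cycSub (C ^ 2) v x hx

lemma cycSub_sq_sup_map (C : Module.End K V) (v : V) :
    cycSub (C ^ 2) v ⊔ (cycSub (C ^ 2) v).map C = cycSub C v := by
  have hle : cycSub (C ^ 2) v ≤ cycSub C v :=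
    cycSub_le ((invt_cycSub C v).pow 2) (self_mem_cycSub C v)
  have hinvt : Invt C (cycSub (C ^ 2) v ⊔ (cycSub (C ^ 2) v).map C) := by
    refine invt_iff_le_comap.2 (sup_le ?_ ?_)
    · exact (Submodule.le_comap_map C _).trans (Submodule.comap_mono le_sup_right)
    · rintro _ ⟨x, hx, rfl⟩
      exact Submodule.mem_sup_left (invt_cycSub (C ^ 2) v x hx)
  refine le_antisymm (sup_le hle ?_) (cycSub_le hinvt ?_)
  · rintro _ ⟨x, hx, rfl⟩
    exact invt_cycSub C v x (hle hx)
  · exact Submodule.mem_sup_left (self_mem_cycSub _ v)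

lemma restrict_map_nondegenerate_of_isSkewAdjoint (hf : f.IsSymm) (hC : IsSkewAdjoint f C)
    (hker : LinearMap.ker C = ⊥) {W : Submodule K V} (hW : Invt (C ^ 2) W)
    (hnd : (f.restrict W).Nondegenerate) : (f.restrict (W.map C)).Nondegenerate := by
  rw [restrict_nondegenerate_iff hf] at hnd ⊢
  rintro _ ⟨x, hx, rfl⟩ hxy
  have hsq : (C ^ 2) x = 0 := hnd _ (hW x hx) fun y hy => by
    rw [sq, Module.End.mul_apply, hC, Pi.neg_apply, map_neg, hxy _ ⟨y, hy, rfl⟩, neg_zero]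
  exact LinearMap.ker_eq_bot'.1 hker _ hsq

lemma ker_aeval_ne_bot_of_dvd_minpoly [FiniteDimensional K V] {S : Module.End K V} {p : K[X]}
    (hp : ¬IsUnit p) (hdvd : p ∣ minpoly K S) : LinearMap.ker (aeval S p) ≠ ⊥ := by
  intro hker
  obtain ⟨q, hq⟩ := hdvd
  have hq0 : q ≠ 0 := right_ne_zero_of_mul
    (hq ▸ minpoly.ne_zero (Algebra.IsIntegral.isIntegral (R := K) S))
  have haeval : aeval S q = 0 := LinearMap.ext fun x => LinearMap.ker_eq_bot'.1 hker _ (by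
    rw [← Module.End.mul_apply, ← map_mul, ← hq, minpoly.aeval, LinearMap.zero_apply])
  have hpq : p * q ∣ 1 * q := by
    rw [← hq, one_mul]
    exact minpoly.dvd K S haeval
  exact hp (isUnit_of_dvd_one ((mul_dvd_mul_iff_right hq0).1 hpq))

lemma exists_isSwapped_of_ker_eq_bot [FiniteDimensional K V] [Nontrivial V] (h2 : (2 : K) ≠ 0)
    (hf : f.IsSymm) (hnd : f.Nondegenerate) (hC : IsSkewAdjoint f C)
    (hker : LinearMap.ker C = ⊥) :
    ∃ P Q, IsSwapped f C P Q ∧ P ⊔ Q ≠ ⊥ ∧ (f.restrict (P ⊔ Q)).Nondegenerate := by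
  have hsq := isAdjointPair_sq_of_isSkewAdjoint hC
  obtain ⟨p, hp, hdvd⟩ := WfDvdMonoid.exists_irreducible_factor
    (minpoly.not_isUnit K (C ^ 2)) (minpoly.ne_zero (Algebra.IsIntegral.isIntegral (C ^ 2)))
  obtain ⟨e, u, hu, hmem⟩ :=
    exists_pow_apply_notMem_range (ker_aeval_ne_bot_of_dvd_minpoly hp.not_isUnit hdvd)
  obtain ⟨v, hv, hne⟩ := exists_apply_pow_self_ne_zero h2 hf hnd (isAdjointPair_aeval hsq p) rfl
    le_rfl hu hmem
  have hswap := isSwapped_cycSub_sq h2 hf hC v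
  have hP : (f.restrict (cycSub (C ^ 2) v)).Nondegenerate :=
    restrict_cycSub_nondegenerate hf hsq (invt_cycSub _ v) hp (by rwa [map_pow])
      (by rwa [map_pow])
  have hQ := restrict_map_nondegenerate_of_isSkewAdjoint hf hC hker (invt_cycSub _ v) hP
  refine ⟨_, _, hswap, ?_, restrict_sup_nondegenerate hf hP hQ hswap.le_orthogonal⟩
  refine Submodule.ne_bot_iff _ |>.2 ⟨v, Submodule.mem_sup_left (self_mem_cycSub _ v), ?_⟩
  rintro rfl
  simp at hne

lemma exists_apply_pow_self_ne_zero_of_even [FiniteDimensional K V] (h2 : (2 : K) ≠ 0)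
    (hf : f.IsSymm) (hnd : f.Nondegenerate) (hC : IsSkewAdjoint f C) {e : ℕ} (he : Even e)
    {u : V} (hu : (C ^ (e + 1)) u = 0) (hmem : (C ^ e) u ∉ LinearMap.range (C ^ (e + 1))) :
    ∃ v, (C ^ (e + 1)) v = 0 ∧ f ((C ^ e) v) v ≠ 0 :=
  exists_apply_pow_self_ne_zero h2 hf hnd (isAdjointPair_neg_of_isSkewAdjoint hC) (he.neg_pow C)
    (by rw [he.add_one.neg_pow, LinearMap.ker_neg]) hu hmem

lemma restrict_cycSub_nondegenerate_of_isSkewAdjoint (hf : f.IsSymm) (hC : IsSkewAdjoint f C)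
    {e : ℕ} {v : V} (hv : (C ^ (e + 1)) v = 0) (hne : f ((C ^ e) v) v ≠ 0) :
    (f.restrict (cycSub C v)).Nondegenerate :=
  restrict_cycSub_nondegenerate hf (isAdjointPair_neg_of_isSkewAdjoint hC)
    (fun x hx => neg_mem (invt_cycSub C v x hx)) irreducible_X (by rwa [aeval_X_pow])
    (by rwa [aeval_X_pow])

lemma exists_isSwapped_of_even [FiniteDimensional K V] (h2 : (2 : K) ≠ 0)
    (hf : f.IsSymm) (hnd : f.Nondegenerate) (hC : IsSkewAdjoint f C) {e : ℕ} (he : Even e)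
    {u : V} (hu : (C ^ (e + 1)) u = 0) (hmem : (C ^ e) u ∉ LinearMap.range (C ^ (e + 1))) :
    ∃ P Q, IsSwapped f C P Q ∧ P ⊔ Q ≠ ⊥ ∧ (f.restrict (P ⊔ Q)).Nondegenerate := by
  obtain ⟨v, hv, hne⟩ := exists_apply_pow_self_ne_zero_of_even h2 hf hnd hC he hu hmem
  refine ⟨_, _, isSwapped_cycSub_sq h2 hf hC v, ?_⟩
  rw [cycSub_sq_sup_map]
  refine ⟨?_, restrict_cycSub_nondegenerate_of_isSkewAdjoint hf hC hv hne⟩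
  refine Submodule.ne_bot_iff _ |>.2 ⟨v, self_mem_cycSub C v, ?_⟩
  rintro rfl
  simp at hne

lemma pow_apply_notMem_cycSub_sq_sup_range {e : ℕ} (he : Odd e) {u : V}
    (hu : (C ^ (e + 1)) u = 0) (hmem : (C ^ e) u ∉ LinearMap.range (C ^ (e + 1))) :
    (C ^ e) u ∉ cycSub (C ^ 2) u ⊔ LinearMap.range (C ^ (e + 1)) := by
  intro hsup
  obtain ⟨_, hx, _, ⟨w, rfl⟩, hsum⟩ := Submodule.mem_sup.1 hsup
  obtain ⟨q, rfl⟩ := mem_cycSub.1 hx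
  obtain ⟨l, hl, hker⟩ := Submodule.exists_le_ker_of_notMem hmem
  have hdvd : X ^ (e + 1) ∣ X ^ e - expand K 2 q := by
    refine pow_succ_dvd_of_functional irreducible_X (by rwa [aeval_X_pow])
      (by rwa [aeval_X_pow]) fun c => hker ?_
    have hw : aeval C (X ^ e - expand K 2 q) u = (C ^ (e + 1)) w := by
      rw [map_sub, LinearMap.sub_apply, aeval_X_pow, expand_aeval, ← hsum, add_sub_cancel_left]
    refine ⟨aeval C c w, ?_⟩
    rw [map_mul, Module.End.mul_apply, hw, ← aeval_X_pow (R := K), ← Module.End.mul_apply,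
      ← Module.End.mul_apply, ← map_mul, ← map_mul, mul_comm]
  have hcoeff := X_pow_dvd_iff.1 hdvd e (Nat.lt_succ_self e)
  rw [coeff_sub, coeff_X_pow_self, coeff_expand two_pos,
    if_neg he.not_two_dvd_nat, sub_zero] at hcoeff
  exact one_ne_zero hcoeff

lemma restrict_cycSub_sup_cycSub_nondegenerate (h2 : (2 : K) ≠ 0) (hf : f.IsSymm)
    (hC : IsSkewAdjoint f C) {e : ℕ} (he : Odd e) {u v : V} (hu : (C ^ (e + 1)) u = 0)
    (hv : (C ^ (e + 1)) v = 0) (huv : f ((C ^ e) u) v ≠ 0) :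
    (f.restrict (cycSub C u ⊔ cycSub C v)).Nondegenerate := by
  have hskew := isSkewAdjoint_pow_of_odd hC he
  have halt := apply_self_eq_zero_of_isSkewAdjoint h2 hf hskew
  have hvu : f ((C ^ e) v) u ≠ 0 := by
    rw [hskew, Pi.neg_apply, map_neg, neg_ne_zero]
    rwa [← hf.eq]
  rw [restrict_nondegenerate_iff hf]
  intro x hx hxy
  obtain ⟨_, hxu, _, hxv, rfl⟩ := Submodule.mem_sup.1 hx
  obtain ⟨a, rfl⟩ := mem_cycSub.1 hxu
  obtain ⟨b, rfl⟩ := mem_cycSub.1 hxv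
  have hortho {w : V} (hw : cycSub C w ≤ cycSub C u ⊔ cycSub C v) (k : ℕ) :
      f.flip w ((C ^ k) (aeval C a u + aeval C b v)) = 0 := by
    rw [LinearMap.BilinForm.flip_apply,
      isAdjointPair_pow (isAdjointPair_neg_of_isSkewAdjoint hC) k]
    refine hxy _ (hw ?_)
    exact Invt.pow (fun x hx => neg_mem (invt_cycSub C w x hx)) k w (self_mem_cycSub C w)
  obtain ⟨ha, hb⟩ := pow_succ_dvd_of_aeval_add_aeval hu hv (l := f.flip u) (m := f.flip v)
    (halt u) hvu huv (halt v) (hortho le_sup_left) (hortho le_sup_right)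
  rw [aeval_eq_zero_of_pow_dvd hu ha, aeval_eq_zero_of_pow_dvd hv hb, add_zero]

lemma exists_isSwapped_of_odd [FiniteDimensional K V] (h2 : (2 : K) ≠ 0)
    (hf : f.IsSymm) (hnd : f.Nondegenerate) (hC : IsSkewAdjoint f C) {e : ℕ} (he : Odd e)
    {u : V} (hu : (C ^ (e + 1)) u = 0) (hmem : (C ^ e) u ∉ LinearMap.range (C ^ (e + 1))) :
    ∃ P Q, IsSwapped f C P Q ∧ P ⊔ Q ≠ ⊥ ∧ (f.restrict (P ⊔ Q)).Nondegenerate := by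
  obtain ⟨v, hvM, huv⟩ := exists_mem_orthogonal_apply_ne_zero hf hnd
    (pow_apply_notMem_cycSub_sq_sup_range he hu hmem)
  have hv : (C ^ (e + 1)) v = 0 := by
    have := apply_eq_zero_of_mem_orthogonal_range hnd
      (isAdjointPair_pow (isAdjointPair_neg_of_isSkewAdjoint hC) (e + 1))
      (LinearMap.BilinForm.orthogonal_le le_sup_right hvM)
    rwa [he.add_one.neg_pow] at this
  have hsq := isAdjointPair_sq_of_isSkewAdjoint hC
  have hEven : cycSub (C ^ 2) v ≤ f.orthogonal (cycSub (C ^ 2) u) :=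
    cycSub_le (Invt.orthogonal hsq (invt_cycSub _ u))
      (LinearMap.BilinForm.orthogonal_le le_sup_left hvM)
  have hOdd : (cycSub (C ^ 2) u).map C ≤ f.orthogonal ((cycSub (C ^ 2) v).map C) := by
    rintro _ ⟨x, hx, rfl⟩ _ ⟨y, hy, rfl⟩
    rw [hC, Pi.neg_apply, map_neg, ← hf.eq, neg_eq_zero]
    exact hEven hy _ (invt_cycSub _ u x hx)
  refine ⟨_, _, (isSwapped_cycSub_sq h2 hf hC u).sup ((isSwapped_cycSub_sq h2 hf hC v).symm hf)
    hEven hOdd, ?_⟩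
  rw [sup_sup_sup_comm, sup_comm _ (cycSub _ v), cycSub_sq_sup_map, cycSub_sq_sup_map]
  refine ⟨?_, restrict_cycSub_sup_cycSub_nondegenerate h2 hf hC he hu hv huv⟩
  refine Submodule.ne_bot_iff _ |>.2 ⟨u, Submodule.mem_sup_left (self_mem_cycSub C u), ?_⟩
  rintro rfl
  simp at huv

lemma exists_isSwapped [FiniteDimensional K V] [Nontrivial V] (h2 : (2 : K) ≠ 0)
    (hf : f.IsSymm) (hnd : f.Nondegenerate) (hC : IsSkewAdjoint f C) :
    ∃ P Q, IsSwapped f C P Q ∧ P ⊔ Q ≠ ⊥ ∧ (f.restrict (P ⊔ Q)).Nondegenerate := by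
  by_cases hker : LinearMap.ker C = ⊥
  · exact exists_isSwapped_of_ker_eq_bot h2 hf hnd hC hker
  · obtain ⟨e, u, hu, hmem⟩ := exists_pow_apply_notMem_range hker
    rcases Nat.even_or_odd e with he | he
    · exact exists_isSwapped_of_even h2 hf hnd hC he hu hmem
    · exact exists_isSwapped_of_odd h2 hf hnd hC he hu hmem

lemma exists_isSwapped_sup_eq_top [FiniteDimensional K V] (h2 : (2 : K) ≠ 0)
    (hf : f.IsSymm) (hnd : f.Nondegenerate) (hC : IsSkewAdjoint f C) :
    ∃ P Q, IsSwapped f C P Q ∧ P ⊔ Q = ⊤ := by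
  induction hn : finrank K V using Nat.strong_induction_on generalizing V with
  | _ n ih =>
    subst hn
    cases subsingleton_or_nontrivial V
    · exact ⟨⊥, ⊥, ⟨bot_le, bot_le, bot_le⟩, Subsingleton.elim _ _⟩
    obtain ⟨P, Q, hPQ, hne, hndPQ⟩ := exists_isSwapped h2 hf hnd hC
    have hcompl := LinearMap.BilinForm.isCompl_orthogonal_of_restrict_nondegenerate hf.isRefl hndPQ
    have hinvt : Invt C (f.orthogonal (P ⊔ Q)) :=
      Invt.orthogonal (S := -C) (fun x y => by simp [hC x y]) fun x hx =>
        neg_mem (hPQ.invt_sup x hx)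
    have hlt : finrank K (f.orthogonal (P ⊔ Q)) < finrank K V := Submodule.finrank_lt fun htop =>
      hne ((LinearMap.BilinForm.orthogonal_eq_top_iff hf.isRefl hndPQ).1 htop)
    obtain ⟨P', Q', hPQ', htop⟩ := ih _ hlt (hf.restrict _)
      (restrict_orthogonal_nondegenerate hf hnd hndPQ) (C := C.restrict hinvt)
      (fun x y => hC x y) rfl
    have hP' : P'.map (Submodule.subtype _) ≤ f.orthogonal (P ⊔ Q) := Submodule.map_subtype_le _ _
    have hQ' : Q'.map (Submodule.subtype _) ≤ f.orthogonal (P ⊔ Q) := Submodule.map_subtype_le _ _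
    refine ⟨_, _, hPQ.sup hPQ'.map_subtype
      (hQ'.trans (LinearMap.BilinForm.orthogonal_le le_sup_left)) fun q hq p' hp' =>
        (hf.eq _ _).trans (hP' hp' q (Submodule.mem_sup_right hq)), ?_⟩
    rw [sup_sup_sup_comm, ← Submodule.map_sup, htop, Submodule.map_subtype_top, hcompl.sup_eq_top]

lemma IsSwapped.isCompl (hf : f.IsSymm) (hnd : f.Nondegenerate) {P Q : Submodule K V}
    (h : IsSwapped f C P Q) (htop : P ⊔ Q = ⊤) : IsCompl P Q := by
  refine ⟨Submodule.disjoint_def.2 fun x hxP hxQ => hnd.2 x fun y => ?_, codisjoint_iff.2 htop⟩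
  obtain ⟨p, hp, q, hq, rfl⟩ := Submodule.mem_sup.1 (htop ▸ Submodule.mem_top : y ∈ P ⊔ Q)
  rw [map_add, LinearMap.add_apply, h.le_orthogonal hxQ p hp,
    (h.symm hf).le_orthogonal hxP q hq, add_zero]

lemma exists_involution_anticommute [FiniteDimensional K V] (h2 : (2 : K) ≠ 0)
    (hf : f.IsSymm) (hnd : f.Nondegenerate) (hC : IsSkewAdjoint f C) :
    ∃ σ : Module.End K V, σ * σ = 1 ∧ LinearMap.IsOrthogonal f σ ∧ σ * C = -(C * σ) := by
  obtain ⟨P, Q, hPQ, htop⟩ := exists_isSwapped_sup_eq_top h2 hf hnd hC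
  have hcompl := hPQ.isCompl hf hnd htop
  have hdecomp (x : V) : ∃ p ∈ P, ∃ q ∈ Q, p + q = x :=
    Submodule.mem_sup.1 (htop ▸ Submodule.mem_top)
  let σ : Module.End K V := LinearMap.ofIsCompl hcompl P.subtype (-Q.subtype)
  have hσP {p : V} (hp : p ∈ P) : σ p = p := LinearMap.ofIsCompl_apply_left hcompl ⟨p, hp⟩
  have hσQ {q : V} (hq : q ∈ Q) : σ q = -q := LinearMap.ofIsCompl_apply_right hcompl ⟨q, hq⟩
  refine ⟨σ, LinearMap.ext fun x => ?_, fun x y => ?_, LinearMap.ext fun x => ?_⟩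
  · obtain ⟨p, hp, q, hq, rfl⟩ := hdecomp x
    simp [hσP hp, hσQ hq]
  · obtain ⟨p, hp, q, hq, rfl⟩ := hdecomp x
    obtain ⟨p', hp', q', hq', rfl⟩ := hdecomp y
    simp [hσP hp, hσQ hq, hσP hp', hσQ hq', hPQ.le_orthogonal hq' p hp,
      (hPQ.symm hf).le_orthogonal hp' q hq]
  · obtain ⟨p, hp, q, hq, rfl⟩ := hdecomp x
    simp [hσP hp, hσQ hq, hσP (hPQ.le_comap_right hq), hσQ (hPQ.le_comap_left hp), add_comm]

end SkewAdjoint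

section InterchangedComplements

lemma finrank_map_add_finrank_inf_ker [FiniteDimensional K V] (T : Module.End K V)
    (W : Submodule K V) :
    finrank K (W.map T) + finrank K ↥(W ⊓ LinearMap.ker T) = finrank K W := by
  have hrange : LinearMap.range (T.domRestrict W) = W.map T := T.range_domRestrict W
  have hker : (LinearMap.ker (T.domRestrict W)).map W.subtype = W ⊓ LinearMap.ker T := by
    rw [LinearMap.ker_domRestrict, Submodule.map_comap_subtype]
  rw [← (T.domRestrict W).finrank_range_add_finrank_ker, hrange, ← hker,
    Submodule.finrank_map_subtype_eq]

lemma map_pow_le_of_even {C : Module.End K V} {A B : Submodule K V} (hA : A.map C ≤ B)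
    (hB : B.map C ≤ A) {n : ℕ} (hn : Even n) : A.map (C ^ n) ≤ A := by
  have hsq : Invt (C ^ 2) A := fun x hx => hB ⟨C x, hA ⟨x, hx, rfl⟩, rfl⟩
  obtain ⟨k, rfl⟩ := hn
  rw [← two_mul, pow_mul, Submodule.map_le_iff_le_comap]
  exact hsq.pow k

lemma map_pow_succ (C : Module.End K V) (W : Submodule K V) (n : ℕ) :
    W.map (C ^ (n + 1)) = (W.map (C ^ n)).map C := by
  rw [pow_succ', Module.End.mul_eq_comp, Submodule.map_comp]

lemma map_pow_inf_ker_eq {C : Module.End K V} {A B : Submodule K V} (hAB : IsCompl A B)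
    (hA : A.map C ≤ B) (hB : B.map C ≤ A) {e : ℕ} (he : Even e)
    (hC : LinearMap.range (C ^ e) ⊓ LinearMap.ker C ≤ LinearMap.range (C ^ (e + 1))) :
    A.map (C ^ e) ⊓ LinearMap.ker C = B.map (C ^ (e + 1)) ⊓ LinearMap.ker C := by
  have hle : B.map (C ^ (e + 1)) ≤ A.map (C ^ e) := by
    rw [pow_succ, Module.End.mul_eq_comp, Submodule.map_comp]
    exact Submodule.map_mono hB
  refine le_antisymm ?_ (inf_le_inf_right _ hle)
  intro x hx
  have hxA : x ∈ A := map_pow_le_of_even hA hB he hx.1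
  obtain ⟨y, rfl⟩ := hC ⟨LinearMap.map_le_range hx.1, hx.2⟩
  obtain ⟨a, ha, b, hb, rfl⟩ :=
    Submodule.mem_sup.1 (hAB.sup_eq_top ▸ Submodule.mem_top : y ∈ A ⊔ B)
  have haB : (C ^ (e + 1)) a ∈ B := by
    rw [pow_succ', Module.End.mul_apply]
    exact hA ⟨_, map_pow_le_of_even hA hB he ⟨a, ha, rfl⟩, rfl⟩
  have hbA : (C ^ (e + 1)) b ∈ A := by
    rw [pow_succ', Module.End.mul_apply]
    exact hB ⟨_, map_pow_le_of_even hB hA he ⟨b, hb, rfl⟩, rfl⟩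
  have ha0 : (C ^ (e + 1)) a = 0 := by
    refine Submodule.disjoint_def.1 hAB.disjoint _ ?_ haB
    rw [map_add] at hxA
    exact (Submodule.add_mem_iff_left _ hbA).1 hxA
  refine ⟨⟨b, hb, ?_⟩, hx.2⟩
  rw [map_add, ha0, zero_add]

lemma finrank_map_pow_add [FiniteDimensional K V] (C : Module.End K V) {A B : Submodule K V}
    (hAB : IsCompl A B) (hA : A.map C ≤ B) (hB : B.map C ≤ A) {e : ℕ} (he : Even e)
    (hC : LinearMap.range (C ^ e) ⊓ LinearMap.ker C ≤ LinearMap.range (C ^ (e + 1))) :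
    finrank K (A.map (C ^ e)) + finrank K (B.map (C ^ (e + 2))) =
      finrank K (A.map (C ^ (e + 1))) + finrank K (B.map (C ^ (e + 1))) := by
  have hAe := finrank_map_add_finrank_inf_ker C (A.map (C ^ e))
  have hBe := finrank_map_add_finrank_inf_ker C (B.map (C ^ (e + 1)))
  rw [map_pow_inf_ker_eq hAB hA hB he hC, ← map_pow_succ] at hAe
  rw [← map_pow_succ, add_assoc e, one_add_one_eq_two] at hBe
  omega

lemma finrank_map_pow_le [FiniteDimensional K V] (C : Module.End K V) {A B : Submodule K V}
    (hA : A.map C ≤ B) {n : ℕ} (hn : Disjoint (LinearMap.ker C) (LinearMap.range (C ^ n))) :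
    finrank K (A.map (C ^ n)) ≤ finrank K (B.map (C ^ n)) := by
  have hinf : A.map (C ^ n) ⊓ LinearMap.ker C = ⊥ :=
    (hn.symm.mono_left LinearMap.map_le_range).eq_bot
  rw [← finrank_map_add_finrank_inf_ker C (A.map (C ^ n)), hinf, finrank_bot, add_zero,
    ← map_pow_succ, pow_succ, Module.End.mul_eq_comp, Submodule.map_comp]
  exact Submodule.finrank_mono (Submodule.map_mono hA)

/-- Passing from `C ^ e` to `C ^ (e + 2)`, the images of `A` and of `B` lose the same dimension,
and eventually `C` restricts to isomorphisms between these images. -/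
lemma finrank_eq_of_interchanged [FiniteDimensional K V] {C : Module.End K V}
    {A B : Submodule K V} (hAB : IsCompl A B) (hA : A.map C ≤ B) (hB : B.map C ≤ A)
    (hC : ∀ e, Even e → LinearMap.range (C ^ e) ⊓ LinearMap.ker C ≤ LinearMap.range (C ^ (e + 1))) :
    finrank K A = finrank K B := by
  have hconst (i : ℕ) : finrank K A + finrank K (B.map (C ^ (2 * i))) =
      finrank K B + finrank K (A.map (C ^ (2 * i))) := by
    induction i with
    | zero =>
      rw [mul_zero, pow_zero, Module.End.one_eq_id, Submodule.map_id, Submodule.map_id, add_comm]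
    | succ i ih =>
      have he : Even (2 * i) := even_two_mul i
      have hstepA := finrank_map_pow_add C hAB hA hB he (hC _ he)
      have hstepB := finrank_map_pow_add C hAB.symm hB hA he (hC _ he)
      rw [mul_add, mul_one]
      omega
  obtain ⟨N, hN⟩ := Filter.eventually_atTop.1 C.eventually_isCompl_ker_pow_range_pow
  have hdisj : Disjoint (LinearMap.ker C) (LinearMap.range (C ^ (2 * (N + 1)))) :=
    (hN (2 * (N + 1)) (by omega)).disjoint.mono_left fun x hx =>
      Module.End.pow_map_zero_of_le (k := 1) (by omega) (by simpa using hx)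
  have hle := finrank_map_pow_le C hA hdisj
  have hge := finrank_map_pow_le C hB hdisj
  have := hconst (N + 1)
  omega

end InterchangedComplements

section Determinants

lemma det_eq_det_restrict_mul_det_restrict [FiniteDimensional K V] {σ : Module.End K V}
    {U W : Submodule K V} (hUW : IsCompl U W) (hU : Invt σ U) (hW : Invt σ W) :
    LinearMap.det σ = LinearMap.det (σ.restrict hU) * LinearMap.det (σ.restrict hW) := by
  let e := Submodule.prodEquivOfIsCompl U W hUW
  have hconj : e ∘ₗ ((σ.restrict hU).prodMap (σ.restrict hW)) ∘ₗ e.symm = σ := by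
    rw [← LinearMap.comp_assoc, LinearEquiv.comp_toLinearMap_symm_eq]
    ext x <;> simp [e] <;> rfl
  rw [← LinearMap.det_prodMap, ← LinearMap.det_conj _ e, hconj]

variable {σ C : Module.End K V}

lemma mem_ker_sub_one {x : V} : x ∈ LinearMap.ker (σ - 1) ↔ σ x = x := by
  rw [LinearMap.mem_ker, LinearMap.sub_apply, Module.End.one_apply, sub_eq_zero]

lemma mem_ker_add_one {x : V} : x ∈ LinearMap.ker (σ + 1) ↔ σ x = -x := by
  rw [LinearMap.mem_ker, LinearMap.add_apply, Module.End.one_apply, add_eq_zero_iff_eq_neg]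

lemma isCompl_ker_sub_one_ker_add_one (h2 : (2 : K) ≠ 0) (hσ : σ * σ = 1) :
    IsCompl (LinearMap.ker (σ - 1)) (LinearMap.ker (σ + 1)) := by
  refine ⟨Submodule.disjoint_def.2 fun x hx hx' => ?_, codisjoint_iff.2 ?_⟩
  · have hneg : x = -x := (mem_ker_sub_one.1 hx).symm.trans (mem_ker_add_one.1 hx')
    have h2x : (2 : K) • x = 0 := by rw [two_smul, ← add_neg_cancel x, ← hneg]
    exact (smul_eq_zero.1 h2x).resolve_left h2
  · refine eq_top_iff.2 fun x _ => ?_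
    have hσσ : σ (σ x) = x := LinearMap.congr_fun hσ x
    refine Submodule.mem_sup.2 ⟨(2 : K)⁻¹ • (x + σ x), ?_, (2 : K)⁻¹ • (x - σ x), ?_, ?_⟩
    · rw [mem_ker_sub_one, map_smul, map_add, hσσ, add_comm]
    · rw [mem_ker_add_one, map_smul, map_sub, hσσ, ← smul_neg, neg_sub]
    · rw [← smul_add, add_add_sub_cancel, ← two_smul K x, inv_smul_smul₀ h2]

lemma det_of_mul_self_eq_one [FiniteDimensional K V] (h2 : (2 : K) ≠ 0) (hσ : σ * σ = 1) :
    LinearMap.det σ = (-1) ^ finrank K (LinearMap.ker (σ + 1)) := by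
  have hinvt : Invt σ (LinearMap.ker (σ - 1)) := fun x hx => by rwa [mem_ker_sub_one.1 hx]
  have hinvt' : Invt σ (LinearMap.ker (σ + 1)) := fun x hx => by
    rw [mem_ker_add_one.1 hx]
    exact neg_mem hx
  have hone : σ.restrict hinvt = LinearMap.id :=
    LinearMap.ext fun x => Subtype.ext (mem_ker_sub_one.1 x.2)
  have hneg : σ.restrict hinvt' = (-1 : K) • LinearMap.id :=
    LinearMap.ext fun x => Subtype.ext ((mem_ker_add_one.1 x.2).trans (neg_one_smul K _).symm)
  rw [det_eq_det_restrict_mul_det_restrict (isCompl_ker_sub_one_ker_add_one h2 hσ) hinvt hinvt',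
    hone, hneg, LinearMap.det_smul, LinearMap.det_id, LinearMap.det_id, mul_one, one_mul]

lemma det_of_mul_self_eq_one_of_anticommute [FiniteDimensional K V] (h2 : (2 : K) ≠ 0)
    (hσ : σ * σ = 1) (hσC : σ * C = -(C * σ))
    (hC : ∀ e, Even e → LinearMap.range (C ^ e) ⊓ LinearMap.ker C ≤ LinearMap.range (C ^ (e + 1))) :
    LinearMap.det σ = (-1) ^ (finrank K V / 2) := by
  have hcompl := isCompl_ker_sub_one_ker_add_one h2 hσ
  have hσC' (x : V) : σ (C x) = -C (σ x) := LinearMap.congr_fun hσC x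
  have hplus : (LinearMap.ker (σ - 1)).map C ≤ LinearMap.ker (σ + 1) := by
    rintro _ ⟨x, hx, rfl⟩
    rw [mem_ker_add_one, hσC', mem_ker_sub_one.1 hx]
  have hminus : (LinearMap.ker (σ + 1)).map C ≤ LinearMap.ker (σ - 1) := by
    rintro _ ⟨x, hx, rfl⟩
    rw [mem_ker_sub_one, hσC', mem_ker_add_one.1 hx, map_neg, neg_neg]
  have heq := finrank_eq_of_interchanged hcompl hplus hminus hC
  have hadd := Submodule.finrank_add_eq_of_isCompl hcompl
  rw [det_of_mul_self_eq_one h2 hσ]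
  congr 1
  omega

end Determinants

section Cayley

variable {f : LinearMap.BilinForm K V} {φ σ : Module.End K V}

/-- The Cayley transform `(φ - 1)(φ + 1)⁻¹`, which turns isometries into skew-adjoint
endomorphisms. It is `0` when `φ + 1` is not invertible. -/
noncomputable def cayley (φ : Module.End K V) : Module.End K V :=
  (φ - 1) * Ring.inverse (φ + 1)

lemma cayley_mul_add_one (hφ : IsUnit (φ + 1)) : cayley φ * (φ + 1) = φ - 1 := by
  rw [cayley, mul_assoc, Ring.inverse_mul_cancel _ hφ, mul_one]

lemma one_sub_cayley_mul_add_one (hφ : IsUnit (φ + 1)) : (1 - cayley φ) * (φ + 1) = 2 := by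
  rw [sub_mul, cayley_mul_add_one hφ, one_mul, ← one_add_one_eq_two]
  abel

lemma mul_one_sub_cayley (hφ : IsUnit (φ + 1)) : φ * (1 - cayley φ) = 1 + cayley φ := by
  refine hφ.mul_right_cancel ?_
  rw [mul_assoc, one_sub_cayley_mul_add_one hφ, add_mul, cayley_mul_add_one hφ, mul_two, one_mul]
  abel

lemma isUnit_one_sub_cayley (h2 : (2 : K) ≠ 0) (hφ : IsUnit (φ + 1)) :
    IsUnit (1 - cayley φ) := by
  have htwo : IsUnit (2 : Module.End K V) := by
    simpa only [map_ofNat] using (IsUnit.mk0 (2 : K) h2).map (algebraMap K (Module.End K V))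
  rw [← one_sub_cayley_mul_add_one hφ] at htwo
  exact (Units.isUnit_mul_units _ hφ.unit).1 htwo

lemma isSkewAdjoint_cayley (hf : LinearMap.IsOrthogonal f φ) (hφ : IsUnit (φ + 1)) :
    LinearMap.IsSkewAdjoint f (cayley φ) := by
  have hsurj : Function.Surjective ⇑(φ + 1) := ((Module.End.isUnit_iff _).1 hφ).2
  have hcayley (x : V) : cayley φ ((φ + 1) x) = (φ - 1) x :=
    LinearMap.congr_fun (cayley_mul_add_one hφ) x
  intro x y
  obtain ⟨x, rfl⟩ := hsurj x
  obtain ⟨y, rfl⟩ := hsurj y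
  simp only [Pi.neg_apply, map_neg, hcayley]
  simp only [LinearMap.add_apply, LinearMap.sub_apply, Module.End.one_apply, map_add, map_sub,
    hf x y]
  ring

lemma reverses_of_anticommute_cayley (h2 : (2 : K) ≠ 0) (hφ : IsUnit (φ + 1))
    (h : σ * cayley φ = -(cayley φ * σ)) : φ * σ * φ = σ := by
  refine (isUnit_one_sub_cayley h2 hφ).mul_right_cancel ?_
  calc φ * σ * φ * (1 - cayley φ)
      = φ * (σ * (1 + cayley φ)) := by rw [mul_assoc, mul_one_sub_cayley hφ, mul_assoc]
    _ = φ * (1 - cayley φ) * σ := by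
      rw [mul_add, h, mul_assoc, sub_mul, mul_one, one_mul, sub_eq_add_neg]
    _ = σ * (1 - cayley φ) := by
      rw [mul_one_sub_cayley hφ, mul_sub, h, add_mul, mul_one, one_mul, sub_neg_eq_add]

lemma anticommute_cayley_of_reverses (hφ : IsUnit (φ + 1)) (h : φ * σ * φ = σ) :
    σ * cayley φ = -(cayley φ * σ) := by
  have hσ : σ * (φ + 1) = (φ + 1) * (σ * φ) := by
    rw [add_mul, ← mul_assoc, h, mul_add, mul_one, one_mul, add_comm]
  refine hφ.mul_right_cancel ?_
  calc σ * cayley φ * (φ + 1)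
      = σ * φ - σ := by rw [mul_assoc, cayley_mul_add_one hφ, mul_sub, mul_one]
    _ = -((φ - 1) * (σ * φ)) := by rw [sub_mul, ← mul_assoc, h, one_mul, neg_sub]
    _ = -(cayley φ * σ) * (φ + 1) := by
      rw [neg_mul, mul_assoc, hσ, ← mul_assoc (cayley φ), cayley_mul_add_one hφ]

lemma Invt.exists_apply_eq [FiniteDimensional K V] {ψ : Module.End K V} (hψ : IsUnit ψ)
    {W : Submodule K V} (hW : Invt ψ W) {x : V} (hx : x ∈ W) : ∃ y ∈ W, ψ y = x := by
  have hinj : Function.Injective (ψ.restrict hW) := fun y z hyz =>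
    Subtype.ext (((Module.End.isUnit_iff _).1 hψ).1 (congrArg Subtype.val hyz))
  obtain ⟨y, hy⟩ := LinearMap.injective_iff_surjective.1 hinj ⟨x, hx⟩
  exact ⟨y, y.2, congrArg Subtype.val hy⟩

lemma invt_of_invt_cayley [FiniteDimensional K V] (h2 : (2 : K) ≠ 0) (hφ : IsUnit (φ + 1))
    {W : Submodule K V} (hW : Invt (cayley φ) W) : Invt φ W := by
  have hsub : Invt (1 - cayley φ) W := fun x hx => sub_mem hx (hW x hx)
  intro x hx
  obtain ⟨y, hy, rfl⟩ := hsub.exists_apply_eq (isUnit_one_sub_cayley h2 hφ) hx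
  rw [← Module.End.mul_apply, mul_one_sub_cayley hφ]
  exact add_mem hy (hW y hy)

end Cayley

section Splitting

variable {f : LinearMap.BilinForm K V} {φ σ : Module.End K V}

lemma isUnit_of_isOrthogonal [FiniteDimensional K V] (hnd : f.Nondegenerate)
    (hφ : LinearMap.IsOrthogonal f φ) : IsUnit φ := by
  refine (LinearMap.isUnit_iff_ker_eq_bot φ).2 ((Submodule.eq_bot_iff _).2 fun x hx => ?_)
  refine hnd.1 x fun y => ?_
  rw [← hφ x y, LinearMap.mem_ker.1 hx, map_zero, LinearMap.zero_apply]

lemma Invt.orthogonal_of_isOrthogonal [FiniteDimensional K V] (hnd : f.Nondegenerate)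
    (hφ : LinearMap.IsOrthogonal f φ) {W : Submodule K V} (hW : Invt φ W) :
    Invt φ (f.orthogonal W) := by
  intro y hy x hx
  obtain ⟨w, hw, rfl⟩ := hW.exists_apply_eq (isUnit_of_isOrthogonal hnd hφ) hx
  exact (hφ w y).trans (hy w hw)

lemma commute_add_one_pow (φ : Module.End K V) (n : ℕ) : Commute ((φ + 1) ^ n) φ :=
  ((Commute.refl φ).add_left (Commute.one_left φ)).pow_left n

lemma apply_add_one_pow_apply_pow (hφ : LinearMap.IsOrthogonal f φ) (n : ℕ) (x y : V) :
    f (((φ + 1) ^ n) x) ((φ ^ n) y) = f x (((φ + 1) ^ n) y) := by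
  induction n generalizing x y with
  | zero => simp
  | succ n ih =>
    have hstep (y : V) : f ((φ + 1) x) (φ y) = f x ((φ + 1) y) := by
      simp only [LinearMap.add_apply, Module.End.one_apply, map_add, hφ x y, add_comm]
    calc f (((φ + 1) ^ (n + 1)) x) ((φ ^ (n + 1)) y)
        = f ((φ + 1) x) (((φ + 1) ^ n) (φ y)) := by
          rw [pow_succ, pow_succ, Module.End.mul_apply, Module.End.mul_apply, ih]
      _ = f ((φ + 1) x) (φ (((φ + 1) ^ n) y)) := by
          rw [← Module.End.mul_apply, (commute_add_one_pow φ n).eq, Module.End.mul_apply]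
      _ = f x (((φ + 1) ^ (n + 1)) y) := by rw [hstep, pow_succ', Module.End.mul_apply]

lemma restrict_ker_add_one_pow_nondegenerate (hf : f.IsSymm) (hnd : f.Nondegenerate)
    (hφ : LinearMap.IsOrthogonal f φ) {n : ℕ}
    (hn : IsCompl (LinearMap.ker ((φ + 1) ^ n)) (LinearMap.range ((φ + 1) ^ n))) :
    (f.restrict (LinearMap.ker ((φ + 1) ^ n))).Nondegenerate := by
  rw [restrict_nondegenerate_iff hf]
  intro x hx hxy
  refine hnd.1 x fun y => ?_
  obtain ⟨k, hk, _, ⟨z, rfl⟩, rfl⟩ :=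
    Submodule.mem_sup.1 (hn.sup_eq_top ▸ Submodule.mem_top : y ∈ _)
  rw [map_add, hxy k hk, ← apply_add_one_pow_apply_pow hφ, LinearMap.mem_ker.1 hx, map_zero,
    LinearMap.zero_apply, add_zero]

lemma add_one_pow_mul_of_reverses (h : φ * σ * φ = σ) (n : ℕ) :
    (φ + 1) ^ n * σ = φ ^ n * σ * (φ + 1) ^ n := by
  induction n with
  | zero => simp
  | succ n ih =>
    have hone : (φ + 1) * σ = φ * (σ * (φ + 1)) := by
      rw [mul_add, mul_add, ← mul_assoc, h, add_mul, mul_one, one_mul, add_comm]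
    calc (φ + 1) ^ (n + 1) * σ
        = φ * ((φ + 1) ^ n * σ) * (φ + 1) := by
          rw [pow_succ, mul_assoc, hone, ← mul_assoc, (commute_add_one_pow φ n).eq]
          simp only [mul_assoc]
      _ = φ ^ (n + 1) * σ * (φ + 1) ^ (n + 1) := by
          rw [ih, pow_succ' φ, pow_succ (φ + 1)]
          simp only [mul_assoc]

lemma invt_ker_add_one_pow_of_reverses (h : φ * σ * φ = σ) (n : ℕ) :
    Invt σ (LinearMap.ker ((φ + 1) ^ n)) := by
  intro x hx
  rw [LinearMap.mem_ker, ← Module.End.mul_apply, add_one_pow_mul_of_reverses h,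
    Module.End.mul_apply, LinearMap.mem_ker.1 hx, map_zero]

lemma add_one_pow_apply_of_apply_eq {x : V} (hx : φ x = x) (n : ℕ) :
    ((φ + 1) ^ n) x = (2 : K) ^ n • x := by
  induction n with
  | zero => simp
  | succ n ih =>
    rw [pow_succ, Module.End.mul_apply, LinearMap.add_apply, hx, Module.End.one_apply,
      ← two_smul K x, map_smul, ih, smul_smul, pow_succ']

lemma invt_ker_add_one_pow (φ : Module.End K V) (n : ℕ) :
    Invt φ (LinearMap.ker ((φ + 1) ^ n)) := by
  intro x hx
  rw [LinearMap.mem_ker, ← Module.End.mul_apply, (commute_add_one_pow φ n).eq,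
    Module.End.mul_apply, LinearMap.mem_ker.1 hx, map_zero]

lemma isUnit_restrict_ker_add_one_pow_sub_one [FiniteDimensional K V] (h2 : (2 : K) ≠ 0) (n : ℕ) :
    IsUnit (φ.restrict (invt_ker_add_one_pow φ n) - 1) := by
  refine (LinearMap.isUnit_iff_ker_eq_bot _).2 ((Submodule.eq_bot_iff _).2 fun x hx => ?_)
  have hfix : φ x = x := congrArg Subtype.val (mem_ker_sub_one.1 hx)
  have hzero : (2 : K) ^ n • (x : V) = 0 := (add_one_pow_apply_of_apply_eq hfix n).symm.trans x.2
  exact Subtype.ext ((smul_eq_zero.1 hzero).resolve_left (pow_ne_zero n h2))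

lemma isUnit_restrict_add_one_of_disjoint [FiniteDimensional K V] {W : Submodule K V}
    (hW : Invt φ W) (hdisj : Disjoint (LinearMap.ker (φ + 1)) W) : IsUnit (φ.restrict hW + 1) := by
  refine (LinearMap.isUnit_iff_ker_eq_bot _).2 ((Submodule.eq_bot_iff _).2 fun x hx => ?_)
  have hneg : φ x = -x := congrArg Subtype.val (mem_ker_add_one.1 hx)
  exact Subtype.ext (Submodule.disjoint_def.1 hdisj x (mem_ker_add_one.2 hneg) x.2)

lemma exists_orthogonal_splitting [FiniteDimensional K V] (h2 : (2 : K) ≠ 0) (hf : f.IsSymm)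
    (hnd : f.Nondegenerate) (hφ : LinearMap.IsOrthogonal f φ) :
    ∃ (W : Submodule K V) (hW : Invt φ W) (hW' : Invt φ (f.orthogonal W)),
      (f.restrict W).Nondegenerate ∧ IsUnit (φ.restrict hW - 1) ∧ IsUnit (φ.restrict hW' + 1) ∧
        ∀ σ : Module.End K V, φ * σ * φ = σ → Invt σ W := by
  obtain ⟨n, hcompl, hn⟩ :=
    ((φ + 1).eventually_isCompl_ker_pow_range_pow.and (Filter.eventually_ge_atTop 1)).exists
  have hndker := restrict_ker_add_one_pow_nondegenerate hf hnd hφ hcompl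
  have hle : LinearMap.ker (φ + 1) ≤ LinearMap.ker ((φ + 1) ^ n) := fun x hx =>
    Module.End.pow_map_zero_of_le hn (by rwa [pow_one])
  have hdisj : Disjoint (LinearMap.ker (φ + 1)) (f.orthogonal (LinearMap.ker ((φ + 1) ^ n))) :=
    (LinearMap.BilinForm.isCompl_orthogonal_of_restrict_nondegenerate hf.isRefl
      hndker).disjoint.mono_left hle
  have hinvt := (invt_ker_add_one_pow φ n).orthogonal_of_isOrthogonal hnd hφ
  exact ⟨_, invt_ker_add_one_pow φ n, hinvt, hndker, isUnit_restrict_ker_add_one_pow_sub_one h2 n,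
    isUnit_restrict_add_one_of_disjoint hinvt hdisj,
    fun σ hσ => invt_ker_add_one_pow_of_reverses hσ n⟩

end Splitting

section ReversingInvolutions

variable {f : LinearMap.BilinForm K V} {φ σ : Module.End K V}

/-- `σ` is an isometric involution conjugating `φ` to `φ⁻¹`. The condition `σφσ⁻¹ = φ⁻¹` is written
without inverses, so that it makes sense for endomorphisms. For an isometry `φ`, such `σ` correspond
to the factorizations `φ = σ(σφ)` into two isometric involutions. -/
structure IsReversingInvolution (f : LinearMap.BilinForm K V) (φ σ : Module.End K V) : Prop where
  mul_self : σ * σ = 1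
  isOrthogonal : LinearMap.IsOrthogonal f σ
  reverses : φ * σ * φ = σ

lemma IsReversingInvolution.neg (h : IsReversingInvolution f φ σ) :
    IsReversingInvolution f φ (-σ) where
  mul_self := by rw [neg_mul_neg, h.mul_self]
  isOrthogonal x y := by simp [h.isOrthogonal x y]
  reverses := by rw [mul_neg, neg_mul, h.reverses]

lemma isReversingInvolution_neg_iff :
    IsReversingInvolution f (-φ) σ ↔ IsReversingInvolution f φ σ := by
  have hneg : -φ * σ * -φ = φ * σ * φ := by rw [neg_mul, neg_mul_neg]
  exact ⟨fun h => ⟨h.mul_self, h.isOrthogonal, hneg ▸ h.reverses⟩,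
    fun h => ⟨h.mul_self, h.isOrthogonal, hneg.trans h.reverses⟩⟩

lemma IsReversingInvolution.restrict (h : IsReversingInvolution f φ σ) {W : Submodule K V}
    (hφ : Invt φ W) (hσ : Invt σ W) :
    IsReversingInvolution (f.restrict W) (φ.restrict hφ) (σ.restrict hσ) where
  mul_self := LinearMap.ext fun x => Subtype.ext (LinearMap.congr_fun h.mul_self x)
  isOrthogonal x y := h.isOrthogonal x y
  reverses := LinearMap.ext fun x => Subtype.ext (LinearMap.congr_fun h.reverses x)

lemma end_ext_of_isCompl {S T : Module.End K V} {U W : Submodule K V} (hUW : IsCompl U W)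
    (hU : ∀ u : U, S u = T u) (hW : ∀ w : W, S w = T w) : S = T := by
  ext x
  obtain ⟨u, hu, w, hw, rfl⟩ := Submodule.mem_sup.1 (hUW.sup_eq_top ▸ Submodule.mem_top : x ∈ U ⊔ W)
  rw [map_add, map_add, hU ⟨u, hu⟩, hW ⟨w, hw⟩]

lemma isOrthogonal_of_restrict (hf : f.IsSymm) {U : Submodule K V}
    (hU : IsCompl U (f.orthogonal U)) (hσU : Invt σ U) (hσU' : Invt σ (f.orthogonal U))
    (horth : LinearMap.IsOrthogonal (f.restrict U) (σ.restrict hσU))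
    (horth' : LinearMap.IsOrthogonal (f.restrict (f.orthogonal U)) (σ.restrict hσU')) :
    LinearMap.IsOrthogonal f σ := by
  have hdecomp (x : V) : ∃ u ∈ U, ∃ w ∈ f.orthogonal U, u + w = x :=
    Submodule.mem_sup.1 (hU.sup_eq_top ▸ Submodule.mem_top)
  have hcross {u w : V} (hu : u ∈ U) (hw : w ∈ f.orthogonal U) : f u w = 0 ∧ f w u = 0 :=
    ⟨hw u hu, (hf.eq w u).trans (hw u hu)⟩
  intro x y
  obtain ⟨u, hu, w, hw, rfl⟩ := hdecomp x
  obtain ⟨u', hu', w', hw', rfl⟩ := hdecomp y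
  have huu' : f (σ u) (σ u') = f u u' := horth ⟨u, hu⟩ ⟨u', hu'⟩
  have hww' : f (σ w) (σ w') = f w w' := horth' ⟨w, hw⟩ ⟨w', hw'⟩
  simp only [map_add, LinearMap.add_apply, huu', hww', hcross hu hw', hcross hu' hw,
    hcross (hσU u hu) (hσU' w' hw'), hcross (hσU u' hu') (hσU' w hw)]

lemma IsReversingInvolution.of_restrict (hf : f.IsSymm) {U : Submodule K V}
    (hU : IsCompl U (f.orthogonal U)) (hφU : Invt φ U) (hφU' : Invt φ (f.orthogonal U))
    (hσU : Invt σ U) (hσU' : Invt σ (f.orthogonal U))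
    (h : IsReversingInvolution (f.restrict U) (φ.restrict hφU) (σ.restrict hσU))
    (h' : IsReversingInvolution (f.restrict (f.orthogonal U)) (φ.restrict hφU')
      (σ.restrict hσU')) :
    IsReversingInvolution f φ σ where
  mul_self := end_ext_of_isCompl hU
    (fun u => congrArg Subtype.val (LinearMap.congr_fun h.mul_self u))
    fun w => congrArg Subtype.val (LinearMap.congr_fun h'.mul_self w)
  isOrthogonal := isOrthogonal_of_restrict hf hU hσU hσU' h.isOrthogonal h'.isOrthogonal
  reverses := end_ext_of_isCompl hU
    (fun u => congrArg Subtype.val (LinearMap.congr_fun h.reverses u))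
    fun w => congrArg Subtype.val (LinearMap.congr_fun h'.reverses w)

lemma exists_isReversingInvolution_of_restrict [FiniteDimensional K V] (hf : f.IsSymm)
    {U : Submodule K V} (hndU : (f.restrict U).Nondegenerate) (hU : Invt φ U)
    (hU' : Invt φ (f.orthogonal U)) {α : Module.End K U} {β : Module.End K (f.orthogonal U)}
    (hα : IsReversingInvolution (f.restrict U) (φ.restrict hU) α)
    (hβ : IsReversingInvolution (f.restrict (f.orthogonal U)) (φ.restrict hU') β) :
    ∃ σ, IsReversingInvolution f φ σ ∧ LinearMap.det σ = LinearMap.det α * LinearMap.det β := by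
  have hcompl := LinearMap.BilinForm.isCompl_orthogonal_of_restrict_nondegenerate hf.isRefl hndU
  let σ : Module.End K V := LinearMap.ofIsCompl hcompl (U.subtype ∘ₗ α) (Submodule.subtype _ ∘ₗ β)
  have hσU (x : U) : σ x = α x := LinearMap.ofIsCompl_apply_left hcompl x
  have hσU' (y : f.orthogonal U) : σ y = β y := LinearMap.ofIsCompl_apply_right hcompl y
  have hinvt : Invt σ U := fun x hx => hσU ⟨x, hx⟩ ▸ (α _).2
  have hinvt' : Invt σ (f.orthogonal U) := fun x hx => hσU' ⟨x, hx⟩ ▸ (β _).2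
  have hrestrict : σ.restrict hinvt = α := LinearMap.ext fun x => Subtype.ext (hσU x)
  have hrestrict' : σ.restrict hinvt' = β := LinearMap.ext fun x => Subtype.ext (hσU' x)
  refine ⟨σ, .of_restrict hf hcompl hU hU' hinvt hinvt' (hrestrict ▸ hα) (hrestrict' ▸ hβ), ?_⟩
  rw [det_eq_det_restrict_mul_det_restrict hcompl hinvt hinvt', hrestrict, hrestrict']

lemma exists_isReversingInvolution_of_isUnit_add_one [FiniteDimensional K V] (h2 : (2 : K) ≠ 0)
    (hf : f.IsSymm) (hnd : f.Nondegenerate) (hφ : LinearMap.IsOrthogonal f φ)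
    (hunit : IsUnit (φ + 1)) : ∃ σ, IsReversingInvolution f φ σ := by
  obtain ⟨σ, hσ, horth, hanti⟩ :=
    exists_involution_anticommute h2 hf hnd (isSkewAdjoint_cayley hφ hunit)
  exact ⟨σ, hσ, horth, reverses_of_anticommute_cayley h2 hunit hanti⟩

lemma isOrthogonal_neg (hφ : LinearMap.IsOrthogonal f φ) :
    LinearMap.IsOrthogonal f (-φ : Module.End K V) :=
  fun x y => by simp [hφ x y]

lemma isUnit_neg_add_one (hφ : IsUnit (φ - 1)) : IsUnit (-φ + 1) := by
  rw [neg_add_eq_sub, ← neg_sub]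
  exact hφ.neg

theorem exists_isReversingInvolution [FiniteDimensional K V] (h2 : (2 : K) ≠ 0) (hf : f.IsSymm)
    (hnd : f.Nondegenerate) (hφ : LinearMap.IsOrthogonal f φ) :
    ∃ σ, IsReversingInvolution f φ σ := by
  obtain ⟨W, hW, hW', hndW, hsub, hadd, -⟩ := exists_orthogonal_splitting h2 hf hnd hφ
  obtain ⟨α, hα⟩ := exists_isReversingInvolution_of_isUnit_add_one h2 (hf.restrict W) hndW
    (isOrthogonal_neg (φ := φ.restrict hW) fun x y => hφ x y) (isUnit_neg_add_one hsub)
  obtain ⟨β, hβ⟩ := exists_isReversingInvolution_of_isUnit_add_one h2 (hf.restrict _)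
    (restrict_orthogonal_nondegenerate hf hnd hndW) (φ := φ.restrict hW') (fun x y => hφ x y) hadd
  obtain ⟨σ, hσ, -⟩ := exists_isReversingInvolution_of_restrict hf hndW hW hW'
    (isReversingInvolution_neg_iff.1 hα) hβ
  exact ⟨σ, hσ⟩

lemma IsReversingInvolution.det_eq_one_or (h : IsReversingInvolution f φ σ) :
    LinearMap.det σ = 1 ∨ LinearMap.det σ = -1 := by
  rw [← mul_self_eq_one_iff, ← map_mul, h.mul_self, map_one]

theorem exists_isReversingInvolution_det_eq_one [FiniteDimensional K V] (h2 : (2 : K) ≠ 0)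
    (hf : f.IsSymm) (hnd : f.Nondegenerate) (hφ : LinearMap.IsOrthogonal f φ) {U : Submodule K V}
    (hU : Invt φ U) (hndU : (f.restrict U).Nondegenerate) (hodd : Odd (finrank K U)) :
    ∃ σ, IsReversingInvolution f φ σ ∧ LinearMap.det σ = 1 := by
  obtain ⟨α, hα⟩ := exists_isReversingInvolution h2 (hf.restrict U) hndU (φ := φ.restrict hU)
    fun x y => hφ x y
  have hU' := hU.orthogonal_of_isOrthogonal hnd hφ
  obtain ⟨β, hβ⟩ := exists_isReversingInvolution h2 (hf.restrict _)
    (restrict_orthogonal_nondegenerate hf hnd hndU) (φ := φ.restrict hU') fun x y => hφ x y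
  obtain ⟨σ, hσ, hdet⟩ := exists_isReversingInvolution_of_restrict hf hndU hU hU' hα hβ
  obtain hone | hneg := hσ.det_eq_one_or
  · exact ⟨σ, hσ, hone⟩
  obtain ⟨τ, hτ, hdet'⟩ := exists_isReversingInvolution_of_restrict hf hndU hU hU' hα.neg hβ
  refine ⟨τ, hτ, ?_⟩
  have hdetα : LinearMap.det (-α) = -LinearMap.det α := by
    rw [← neg_one_smul K α, LinearMap.det_smul, hodd.neg_one_pow, neg_one_mul]
  rw [hdet', hdetα, neg_mul, ← hdet, hneg, neg_neg]

lemma isBireflectionalIn_iff {G : Type*} [Group G] {H : Subgroup G} {g : G} (hg : g ∈ H) :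
    IsBireflectionalIn H g ↔ ∃ σ ∈ H, σ ^ 2 = 1 ∧ g * σ * g = σ := by
  constructor
  · rintro ⟨σ, τ, hσ, -, hσ2, hτ2, rfl⟩
    refine ⟨σ, hσ, hσ2, ?_⟩
    rw [sq] at hσ2 hτ2
    rw [mul_assoc (σ * τ), ← mul_assoc σ σ, hσ2, one_mul, mul_assoc, hτ2, mul_one]
  · rintro ⟨σ, hσ, hσ2, hrev⟩
    refine ⟨σ, σ * g, hσ, H.mul_mem hσ hg, hσ2, ?_, ?_⟩
    · rw [sq, mul_assoc, ← mul_assoc g, hrev, ← sq, hσ2]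
    · rw [← mul_assoc, ← sq, hσ2, one_mul]

lemma isBireflectionalIn_specialOrthGroup_iff {φ : V ≃ₗ[K] V} (hφ : φ ∈ specialOrthGroup f) :
    IsBireflectionalIn (specialOrthGroup f) φ ↔
      ∃ σ, IsReversingInvolution f (φ : V →ₗ[K] V) σ ∧ LinearMap.det σ = 1 := by
  rw [isBireflectionalIn_iff hφ]
  constructor
  · rintro ⟨σ, ⟨horth, hdet⟩, hσ2, hrev⟩
    rw [sq] at hσ2
    exact ⟨σ, ⟨LinearMap.ext fun x => LinearEquiv.congr_fun hσ2 x, horth,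
      LinearMap.ext fun x => LinearEquiv.congr_fun hrev x⟩, hdet⟩
  · rintro ⟨σ, hσ, hdet⟩
    have hinv : Function.Involutive σ := LinearMap.congr_fun hσ.mul_self
    refine ⟨LinearEquiv.ofInvolutive σ hinv, ⟨hσ.isOrthogonal, hdet⟩, ?_, ?_⟩
    · exact LinearEquiv.ext fun x => hinv x
    · exact LinearEquiv.ext fun x => LinearMap.congr_fun hσ.reverses x

end ReversingInvolutions

section EvenSummands

variable {f : LinearMap.BilinForm K V} {φ σ C : Module.End K V}

/-- Every orthogonal summand of `φ` has even dimension. -/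
def HasEvenSummands (f : LinearMap.BilinForm K V) (φ : Module.End K V) : Prop :=
  ∀ W : Submodule K V, Invt φ W → (f.restrict W).Nondegenerate → Even (finrank K W)

lemma HasEvenSummands.neg (h : HasEvenSummands f φ) : HasEvenSummands f (-φ) :=
  fun W hW => h W fun x hx => by simpa using hW x hx

lemma HasEvenSummands.restrict (hf : f.IsSymm) (h : HasEvenSummands f φ) {W : Submodule K V}
    (hW : Invt φ W) : HasEvenSummands (f.restrict W) (φ.restrict hW) := by
  intro U hU hndU
  rw [← Submodule.finrank_map_subtype_eq]
  refine h _ ?_ (restrict_map_subtype_nondegenerate hf hndU)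
  rintro _ ⟨x, hx, rfl⟩
  exact ⟨_, hU x hx, rfl⟩

lemma HasEvenSummands.cayley [FiniteDimensional K V] (h2 : (2 : K) ≠ 0) (hφ : IsUnit (φ + 1))
    (h : HasEvenSummands f φ) : HasEvenSummands f (cayley φ) :=
  fun W hW => h W (invt_of_invt_cayley h2 hφ hW)

lemma finrank_cycSub_of_pow_apply_ne_zero {v : V} {e : ℕ} (hv : (C ^ (e + 1)) v = 0)
    (hne : (C ^ e) v ≠ 0) : finrank K (cycSub C v) = e + 1 := by
  rw [finrank_cycSub (q := X ^ (e + 1)), natDegree_X_pow]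
  refine fun a => ⟨fun ha => ?_, aeval_eq_zero_of_pow_dvd hv⟩
  obtain ⟨l, hl⟩ : ∃ l : V →ₗ[K] K, l ((C ^ e) v) ≠ 0 := by
    by_contra! h
    exact hne ((Module.forall_dual_apply_eq_zero_iff K _).1 h)
  refine pow_succ_dvd_of_functional irreducible_X (S := C) (v := v) (l := l) ?_ ?_ fun c => ?_
  · rwa [aeval_X_pow]
  · rwa [aeval_X_pow]
  · rw [map_mul, Module.End.mul_apply, ha, map_zero, map_zero]

lemma HasEvenSummands.range_inf_ker_le [FiniteDimensional K V] (h2 : (2 : K) ≠ 0) (hf : f.IsSymm)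
    (hnd : f.Nondegenerate) (hC : LinearMap.IsSkewAdjoint f C) (h : HasEvenSummands f C) {e : ℕ}
    (he : Even e) : LinearMap.range (C ^ e) ⊓ LinearMap.ker C ≤ LinearMap.range (C ^ (e + 1)) := by
  rintro _ ⟨⟨u, rfl⟩, hu⟩
  by_contra hmem
  have hu : (C ^ (e + 1)) u = 0 := by rwa [pow_succ', Module.End.mul_apply]
  obtain ⟨v, hv, hne⟩ := exists_apply_pow_self_ne_zero_of_even h2 hf hnd hC he hu hmem
  have hdim := finrank_cycSub_of_pow_apply_ne_zero hv fun h0 => hne (by rw [h0]; simp)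
  have heven := h _ (invt_cycSub C v) (restrict_cycSub_nondegenerate_of_isSkewAdjoint hf hC hv hne)
  rw [hdim] at heven
  exact Nat.not_even_iff_odd.2 he.add_one heven

lemma IsReversingInvolution.det_of_isUnit_add_one [FiniteDimensional K V] (h2 : (2 : K) ≠ 0)
    (hf : f.IsSymm) (hnd : f.Nondegenerate) (hφ : LinearMap.IsOrthogonal f φ)
    (hunit : IsUnit (φ + 1)) (heven : HasEvenSummands f φ) (h : IsReversingInvolution f φ σ) :
    LinearMap.det σ = (-1) ^ (finrank K V / 2) :=
  det_of_mul_self_eq_one_of_anticommute h2 h.mul_self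
    (anticommute_cayley_of_reverses hunit h.reverses) fun _ he =>
      (heven.cayley h2 hunit).range_inf_ker_le h2 hf hnd (isSkewAdjoint_cayley hφ hunit) he

theorem IsReversingInvolution.det_eq [FiniteDimensional K V] (h2 : (2 : K) ≠ 0)
    (hf : f.IsSymm) (hnd : f.Nondegenerate) (hφ : LinearMap.IsOrthogonal f φ)
    (heven : HasEvenSummands f φ) (h : IsReversingInvolution f φ σ) :
    LinearMap.det σ = (-1) ^ (finrank K V / 2) := by
  obtain ⟨W, hW, hW', hndW, hsub, hadd, hinvt⟩ := exists_orthogonal_splitting h2 hf hnd hφ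
  have hndW' := restrict_orthogonal_nondegenerate hf hnd hndW
  have hcompl := LinearMap.BilinForm.isCompl_orthogonal_of_restrict_nondegenerate hf.isRefl hndW
  have hσW := hinvt σ h.reverses
  have hσW' := hσW.orthogonal_of_isOrthogonal hnd h.isOrthogonal
  have hdet : LinearMap.det (σ.restrict hσW) = (-1) ^ (finrank K W / 2) :=
    IsReversingInvolution.det_of_isUnit_add_one h2 (hf.restrict W) hndW
      (isOrthogonal_neg (φ := φ.restrict hW) fun x y => hφ x y) (isUnit_neg_add_one hsub)
      (heven.restrict hf hW).neg (isReversingInvolution_neg_iff.2 (h.restrict hW hσW))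
  have hdet' : LinearMap.det (σ.restrict hσW') = (-1) ^ (finrank K (f.orthogonal W) / 2) :=
    (h.restrict hW' hσW').det_of_isUnit_add_one h2 (hf.restrict _) hndW'
      (fun x y => hφ x y) hadd (heven.restrict hf hW')
  rw [det_eq_det_restrict_mul_det_restrict hcompl hσW hσW', hdet, hdet', ← pow_add,
    ← Submodule.finrank_add_eq_of_isCompl hcompl,
    Nat.add_div_of_dvd_right (heven W hW hndW).two_dvd]

end EvenSummands

/-- If `dim V ≡ 2 (mod 4)`, then `φ ∈ SO(V)` is bireflectional in `SO(V)` iff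
`φ` has an orthogonal summand of odd dimension. -/
theorem stmt1 [FiniteDimensional K V] (hK : ringChar K ≠ 2)
    (f : LinearMap.BilinForm K V) (hsymm : f.IsSymm) (hnd : f.Nondegenerate)
    (hdim : Module.finrank K V % 4 = 2)
    (φ : V ≃ₗ[K] V) (hφ : φ ∈ specialOrthGroup f) :
    IsBireflectionalIn (specialOrthGroup f) φ ↔
      ∃ U : Submodule K V, U ≠ ⊥ ∧ Invt (φ : V →ₗ[K] V) U ∧
        (f.restrict U).Nondegenerate ∧ Odd (Module.finrank K U) := by
  have h2 : (2 : K) ≠ 0 := Ring.two_ne_zero hK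
  rw [isBireflectionalIn_specialOrthGroup_iff hφ]
  constructor
  · rintro ⟨σ, hσ, hdet⟩
    by_contra hno
    have heven : HasEvenSummands f (φ : V →ₗ[K] V) := fun W hW hndW =>
      Nat.not_odd_iff_even.1 fun hodd =>
        hno ⟨W, by rintro rfl; simp at hodd, hW, hndW, hodd⟩
    have hhalf : Odd (finrank K V / 2) := Nat.odd_iff.2 (by omega)
    rw [hσ.det_eq h2 hsymm hnd hφ.1 heven, hhalf.neg_one_pow] at hdet
    exact h2 (by linear_combination -hdet)
  · rintro ⟨U, -, hU, hndU, hodd⟩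
    exact exists_isReversingInvolution_det_eq_one h2 hsymm hnd hφ.1 hU hndU hodd

end Biref
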